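/- Let C ⊆ ℝⁿ be a nonempty closed convex set and f : ℝⁿ × ℝⁿ → ℝ a bifunction with f(x,x) = 0 for all x ∈ C which is pseudomonotone on C. Let α_k > 0, and let x^k ∈ C, g^k ∈ ∂*₂ f(x^k, x^k) with ‖g^k‖ = 1 and x^{k+1} = P_C(x^k − α_k·g^k) for all k. Suppose x* ∈ S(EP) and that for each k and every y ∈ ℝⁿ, ⟨g^k, y − x^k⟩ > 0 implies f(x^k, y) > 0. Then ‖x^{k+1} − x*‖² ≤ ‖x^k − x*‖² + α_k² for all k. -/

import Mathlib

open scoped InnerProductSpace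

/-- Under strict quasiconvexity of `f(x^k, ·)` (expressed via the star subgradient `g^k`),
the iterates of the normal-subgradient method satisfy the Fejér-type estimate
`‖x^{k+1} - x*‖² ≤ ‖x^k - x*‖² + α_k²` for every solution `x*`. -/
theorem fejer_estimate_of_strict_quasiconvex (n : ℕ)
    (C : Set (EuclideanSpace ℝ (Fin n)))
    (hCne : C.Nonempty) (hCcl : IsClosed C) (hCcv : Convex ℝ C)
    (f : EuclideanSpace ℝ (Fin n) → EuclideanSpace ℝ (Fin n) → ℝ)
    (hdiag : ∀ x ∈ C, f x x = 0)
    (hpseudo : ∀ x ∈ C, ∀ y ∈ C, 0 ≤ f x y → f y x ≤ 0)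
    (α : ℕ → ℝ) (hαpos : ∀ k, 0 < α k)
    (x g : ℕ → EuclideanSpace ℝ (Fin n))
    (hxC : ∀ k, x k ∈ C)
    (hg : ∀ k, ∀ y : EuclideanSpace ℝ (Fin n), f (x k) y < 0 → ⟪g k, y - x k⟫_ℝ < 0)
    (hgnorm : ∀ k, ‖g k‖ = 1)
    (hproj : ∀ k, ∀ y ∈ C, ⟪(x k - α k • g k) - x (k + 1), y - x (k + 1)⟫_ℝ ≤ 0)
    (xs : EuclideanSpace ℝ (Fin n)) (hxs : xs ∈ C) (hxsS : ∀ y ∈ C, 0 ≤ f xs y)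
    (hstrict : ∀ k, ∀ y : EuclideanSpace ℝ (Fin n),
      0 < ⟪g k, y - x k⟫_ℝ → 0 < f (x k) y) :
    ∀ k, ‖x (k + 1) - xs‖ ^ 2 ≤ ‖x k - xs‖ ^ 2 + (α k) ^ 2 := by
  intro k
  have h1 : ⟪g k, xs - x k⟫_ℝ ≤ 0 := by
    by_contra h
    have h2 := hstrict k xs (not_le.mp h)
    have h3 := hpseudo xs hxs (x k) (hxC k) (hxsS _ (hxC k))
    linarith
  have hp := hproj k xs hxs
  obtain ⟨a, ha⟩ : ∃ a, a = x k - xs := ⟨_, rfl⟩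
  obtain ⟨b, hb⟩ : ∃ b, b = x (k + 1) - xs := ⟨_, rfl⟩
  have e1 : xs - x k = -a := by rw [ha]; abel
  have e2 : xs - x (k + 1) = -b := by rw [hb]; abel
  have e3 : x k - α k • g k - x (k + 1) = (a - α k • g k) - b := by rw [ha, hb]; abel
  rw [e1, inner_neg_right] at h1
  rw [e2, e3, inner_neg_right, inner_sub_left, real_inner_self_eq_norm_sq] at hp
  rw [← ha, ← hb]
  have q1 := norm_sub_sq_real (a - α k • g k) b
  have q2 := norm_sub_sq_real a (α k • g k)
  rw [norm_smul, hgnorm k, mul_one, Real.norm_eq_abs, sq_abs, inner_smul_right,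
    real_inner_comm] at q2
  have q3 := mul_nonneg (hαpos k).le (neg_nonpos.mp h1)
  have q4 := sq_nonneg ‖a - α k • g k - b‖
  linarith
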